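/- Let r ≥ 1, α ∈ K nonzero, and γ_1, …, γ_r ∈ K none of which is a non-positive integer. Then the intersection over s = 1, …, r of the K-subspaces ((θ+γ_1)∘⋯∘(θ+γ_s))((t−α)·K[t]) of K[t] equals ((θ+γ_1)∘⋯∘(θ+γ_r))((t−α)^r·K[t]), where θ = t·d/dt. -/

import Mathlib

open Polynomial

/-- The Euler operator `θ = t·d/dt` on the polynomial ring `K[t]`. -/
noncomputable def theta (K : Type*) [CommRing K] : Module.End K (Polynomial K) :=
  (LinearMap.mulLeft K (X : Polynomial K)) ∘ₗ
    (Polynomial.derivative : Polynomial K →ₗ[K] Polynomial K)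

/-- Composition `f 0 ∘ f 1 ∘ ⋯ ∘ f (k−1)` of a family of endomorphisms. -/
noncomputable def opProd (K : Type*) [CommRing K]
    (f : ℕ → Module.End K (Polynomial K)) (k : ℕ) : Module.End K (Polynomial K) :=
  ((List.range k).map f).prod

/-!
For `c ∈ K` and `α ≠ 0`, the operator `θ + c` lowers the multiplicity of a root at `α` by exactly
one: `(θ + c)((t - α)ⁿ⁺¹ Z) ≡ (n + 1) t (t - α)ⁿ Z` modulo `(t - α)ⁿ⁺¹`, and `(n + 1) t` does not
vanish at `α`. Hence
`(t - α)ⁿ K[t] ∩ (θ + c)((t - α) K[t]) = (θ + c)((t - α)ⁿ⁺¹ K[t])`.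
With `c = γ_{n+1}`, applying `(θ + γ_1) ∘ ⋯ ∘ (θ + γ_n)`, which is injective and so commutes with
intersections, turns this identity into the induction step from `n` to `n + 1`.
-/

open scoped nonZeroDivisors

theorem mem_range_mulLeft_iff_dvd {R A : Type*} [CommSemiring R] [Semiring A] [Algebra R A]
    {a b : A} : b ∈ LinearMap.range (LinearMap.mulLeft R a) ↔ a ∣ b := by
  simp [dvd_def, eq_comm]

section EulerOperator

variable {R : Type*} [CommRing R]

theorem theta_apply (P : R[X]) : theta R P = X * derivative P := rfl

theorem theta_add_smul_one_apply (c : R) (P : R[X]) :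
    (theta R + c • (1 : Module.End R R[X])) P = theta R P + C c * P := by
  simp [smul_eq_C_mul]

theorem coeff_theta (P : R[X]) (n : ℕ) : (theta R P).coeff n = n * P.coeff n := by
  cases n with
  | zero => simp [theta_apply]
  | succ n => simp [theta_apply, coeff_derivative, mul_comm]

theorem theta_add_smul_one_injective {c : R} (hc : ∀ n : ℕ, c + n ∈ R⁰) :
    Function.Injective (theta R + c • (1 : Module.End R R[X])) := by
  rw [injective_iff_map_eq_zero]
  intro P hP
  ext n
  have hcoeff : (c + n) * P.coeff n = 0 := by
    have h := congrArg (coeff · n) hP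
    simp only [theta_add_smul_one_apply, coeff_add, coeff_theta, coeff_C_mul, coeff_zero] at h
    linear_combination h
  exact (mul_left_mem_nonZeroDivisors_eq_zero_iff (hc n)).mp hcoeff

theorem theta_add_smul_one_pow_succ_mul (c : R) (D Z : R[X]) (n : ℕ) :
    (theta R + c • (1 : Module.End R R[X])) (D ^ (n + 1) * Z) =
      D ^ n * ((n + 1) * theta R D * Z + D * (theta R + c • (1 : Module.End R R[X])) Z) := by
  simp only [theta_add_smul_one_apply, theta_apply, derivative_mul, derivative_pow_succ,
    map_add, map_natCast, map_one]
  ring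

theorem pow_dvd_theta_add_smul_one (c : R) {D P : R[X]} {n : ℕ} (h : D ^ (n + 1) ∣ P) :
    D ^ n ∣ (theta R + c • (1 : Module.End R R[X])) P := by
  obtain ⟨Z, rfl⟩ := h
  rw [theta_add_smul_one_pow_succ_mul]
  exact dvd_mul_right _ _

theorem isRoot_of_X_sub_C_pow_dvd_theta_add_smul_one {a : R} (ha : a ∈ R⁰) (c : R) {n : ℕ}
    (hn : ((n + 1 : ℕ) : R) ∈ R⁰) {Z : R[X]}
    (h : (X - C a) ^ (n + 1) ∣
      (theta R + c • (1 : Module.End R R[X])) ((X - C a) ^ (n + 1) * Z)) :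
    Z.IsRoot a := by
  have hdvd : X - C a ∣ (n + 1) * theta R (X - C a) * Z := by
    rwa [theta_add_smul_one_pow_succ_mul, pow_succ,
      ((monic_X_sub_C a).pow n).isRegular.left.dvd_cancel_left,
      dvd_add_left (dvd_mul_right _ _)] at h
  have heval : ((n + 1 : ℕ) * a) * Z.eval a = 0 := by
    simpa [theta_apply] using dvd_iff_isRoot.mp hdvd
  exact (mul_left_mem_nonZeroDivisors_eq_zero_iff (mul_mem hn ha)).mp heval

theorem X_sub_C_pow_dvd_theta_add_smul_one_iff {a : R} (ha : a ∈ R⁰) (c : R) {n : ℕ}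
    (hn : ∀ m ≤ n, m ≠ 0 → (m : R) ∈ R⁰) {P : R[X]} (hP : X - C a ∣ P) :
    (X - C a) ^ n ∣ (theta R + c • (1 : Module.End R R[X])) P ↔ (X - C a) ^ (n + 1) ∣ P := by
  refine ⟨fun h ↦ ?_, pow_dvd_theta_add_smul_one c⟩
  induction n with
  | zero => simpa using hP
  | succ n ih =>
    obtain ⟨Z, rfl⟩ := ih (fun m hm ↦ hn m (hm.trans n.le_succ))
      ((pow_dvd_pow _ n.le_succ).trans h)
    have hroot : Z.IsRoot a :=
      isRoot_of_X_sub_C_pow_dvd_theta_add_smul_one ha c (hn _ le_rfl n.succ_ne_zero) h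
    rw [pow_succ]
    exact mul_dvd_mul_left _ (dvd_iff_isRoot.mpr hroot)

theorem range_mulLeft_X_sub_C_pow_inf_map_theta_add_smul_one {a : R} (ha : a ∈ R⁰) (c : R)
    {n : ℕ} (hn : ∀ m ≤ n, m ≠ 0 → (m : R) ∈ R⁰) :
    LinearMap.range (LinearMap.mulLeft R ((X - C a) ^ n)) ⊓
        (LinearMap.range (LinearMap.mulLeft R (X - C a))).map
          (theta R + c • (1 : Module.End R R[X])) =
      (LinearMap.range (LinearMap.mulLeft R ((X - C a) ^ (n + 1)))).map
        (theta R + c • (1 : Module.End R R[X])) := by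
  ext Q
  simp only [Submodule.mem_inf, Submodule.mem_map, mem_range_mulLeft_iff_dvd]
  constructor
  · rintro ⟨hQ, P, hP, rfl⟩
    exact ⟨P, (X_sub_C_pow_dvd_theta_add_smul_one_iff ha c hn hP).mp hQ, rfl⟩
  · rintro ⟨P, hP, rfl⟩
    exact ⟨pow_dvd_theta_add_smul_one c hP, P, (dvd_pow_self _ n.succ_ne_zero).trans hP, rfl⟩

end EulerOperator

section OpProd

variable {R : Type*} [CommRing R] (f : ℕ → Module.End R R[X])

theorem opProd_zero : opProd R f 0 = 1 := rfl

theorem opProd_succ (k : ℕ) : opProd R f (k + 1) = opProd R f k * f k := by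
  simp [opProd, List.range_succ]

theorem opProd_injective {k : ℕ} (hf : ∀ j < k, Function.Injective (f j)) :
    Function.Injective (opProd R f k) := by
  induction k with
  | zero => exact Function.injective_id
  | succ k ih =>
    rw [opProd_succ]
    exact (ih fun j hj ↦ hf j (hj.trans k.lt_succ_self)).comp (hf k k.lt_succ_self)

end OpProd

theorem stmt5_general {R : Type*} [CommRing R] (r : ℕ) (hr : ∀ n < r, n ≠ 0 → (n : R) ∈ R⁰)
    {α : R} (hα : α ∈ R⁰) (γ : ℕ → R) (hγ : ∀ w, w + 1 < r → ∀ n : ℕ, γ w + n ∈ R⁰) :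
    (⨅ s ∈ Finset.Icc 1 r,
        LinearMap.range
          ((opProd R (fun j => theta R + γ j • (1 : Module.End R R[X])) s) ∘ₗ
            LinearMap.mulLeft R (X - C α))) =
      LinearMap.range
        ((opProd R (fun j => theta R + γ j • (1 : Module.End R R[X])) r) ∘ₗ
          LinearMap.mulLeft R ((X - C α) ^ r)) := by
  simp only [LinearMap.range_comp]
  induction r with
  | zero => simp [opProd_zero, Module.End.one_eq_id]
  | succ r ih =>
    have hinf := ih (fun n hn ↦ hr n (hn.trans r.lt_succ_self))
      fun w hw ↦ hγ w (hw.trans r.lt_succ_self)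
    have hinj := opProd_injective (fun j => theta R + γ j • (1 : Module.End R R[X])) (k := r)
      fun j hj ↦ theta_add_smul_one_injective (hγ j (Nat.succ_lt_succ hj))
    have hstep := range_mulLeft_X_sub_C_pow_inf_map_theta_add_smul_one hα (γ r) (n := r)
      fun m hm ↦ hr m (Nat.lt_succ_of_le hm)
    rw [← Finset.insert_Icc_right_eq_Icc_add_one (Nat.succ_pos r), Finset.iInf_insert, hinf,
      inf_comm]
    rw [opProd_succ, Module.End.mul_eq_comp, Submodule.map_comp, Submodule.map_comp,
      ← Submodule.map_inf _ hinj, hstep]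

/-- Let `r ≥ 1`, `α ∈ K` nonzero, and `γ_1, …, γ_r ∈ K` (indexed here by `γ 0, …, γ (r−1)`)
none of which is a non-positive integer.  The intersection over `s = 1, …, r` of the
subspaces `((θ+γ_1)∘⋯∘(θ+γ_s))((t−α)·K[t])` equals
`((θ+γ_1)∘⋯∘(θ+γ_r))((t−α)^r·K[t])`. -/
theorem stmt5 (K : Type*) [Field K] [CharZero K] (r : ℕ) (hr : 0 < r)
    (α : K) (hα : α ≠ 0) (γ : ℕ → K)
    (hγ : ∀ w < r, ∀ n : ℕ, γ w ≠ -(n : K)) :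
    (⨅ s ∈ Finset.Icc 1 r,
        LinearMap.range
          ((opProd K (fun j => theta K + γ j • (1 : Module.End K (Polynomial K))) s) ∘ₗ
            LinearMap.mulLeft K ((X : Polynomial K) - C α))) =
      LinearMap.range
        ((opProd K (fun j => theta K + γ j • (1 : Module.End K (Polynomial K))) r) ∘ₗ
          LinearMap.mulLeft K (((X : Polynomial K) - C α) ^ r)) :=
  stmt5_general r (fun _ _ hn ↦ mem_nonZeroDivisors_of_ne_zero (Nat.cast_ne_zero.mpr hn))
    (mem_nonZeroDivisors_of_ne_zero hα) γ fun w hw n ↦ mem_nonZeroDivisors_of_ne_zero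
      fun h ↦ hγ w (Nat.lt_of_succ_lt hw) n (eq_neg_of_add_eq_zero_left h)
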